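/- Let p be a prime and let ℤ/p act linearly on S^n via an orthogonal representation ρ : ℤ/p → O(n+1) with fixed point set the great k-sphere S^k, where 0 < k < n. If both n and k are odd, then TC_{ℤ/p}(S^n) = 2. -/

import Mathlib

open Set unitInterval

namespace PaperTC

variable {G X : Type*}

/-- The orbit of `x` under the action `act`. -/
def orbit (act : G → X → X) (x : X) : Set X := {y | ∃ g, act g x = y}

/-- The fixed point set of the action `act`. -/
def fixedSet (act : G → X → X) : Set X := {x | ∀ g, act g x = x}

/-- The fixed point set of a subset `S` of the acting group. -/
def fixedSetOf (act : G → X → X) (S : Set G) : Set X := {x | ∀ g ∈ S, act g x = x}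

/-- `minCover P` is the least `k ≥ 1` satisfying `P k`, as an element of `ℕ∞`
(equal to `∞` if there is no such `k`). -/
noncomputable def minCover (P : ℕ → Prop) : ℕ∞ :=
  sInf {k : ℕ∞ | ∃ m : ℕ, k = m ∧ 1 ≤ m ∧ P m}

section Plain

variable (Y : Type*) [TopologicalSpace Y]

/-- `Y × Y` can be covered by `k` open sets each admitting a motion planner. -/
def TCcover (k : ℕ) : Prop :=
  ∃ U : Fin k → Set (Y × Y),
    (∀ i, IsOpen (U i)) ∧ (⋃ i, U i) = univ ∧
    ∀ i, ∃ s : Y × Y → C(I, Y),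
      ContinuousOn s (U i) ∧ ∀ p ∈ U i, s p 0 = p.1 ∧ s p 1 = p.2

/-- Topological complexity (non-reduced, possibly infinite). -/
noncomputable def TC : ℕ∞ := minCover (TCcover Y)

/-- `Y` can be covered by `k` open sets, each of which can be deformed within `Y`
to a point. -/
def catCover (k : ℕ) : Prop :=
  ∃ U : Fin k → Set Y,
    (∀ i, IsOpen (U i)) ∧ (⋃ i, U i) = univ ∧
    ∀ i, ∃ H : Y × I → Y,
      ContinuousOn H (U i ×ˢ (univ : Set I)) ∧ (∀ x ∈ U i, H (x, 0) = x) ∧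
      ∃ y₀, ∀ x ∈ U i, H (x, 1) = y₀

/-- Non-reduced Lusternik–Schnirelmann category. -/
noncomputable def cat : ℕ∞ := minCover (catCover Y)

end Plain

section Equivariant

variable [TopologicalSpace X] (act : G → X → X)

/-- `X × X` can be covered by `k` invariant open sets each admitting an
equivariant motion planner. -/
def eqTCcover (k : ℕ) : Prop :=
  ∃ U : Fin k → Set (X × X),
    (∀ i, IsOpen (U i)) ∧ (⋃ i, U i) = univ ∧
    ∀ i, (∀ g p, p ∈ U i → (act g p.1, act g p.2) ∈ U i) ∧
      ∃ s : X × X → C(I, X),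
        ContinuousOn s (U i) ∧
        (∀ p ∈ U i, s p 0 = p.1 ∧ s p 1 = p.2) ∧
        (∀ g p, p ∈ U i → ∀ t : I, s (act g p.1, act g p.2) t = act g (s p t))

/-- Equivariant topological complexity `TC_G` of Colman and Grant. -/
noncomputable def eqTC : ℕ∞ := minCover (eqTCcover act)

/-- `X × X` can be covered by `k` `(G × G)`-invariant open sets, each admitting a
`(G × G)`-equivariant section of `π^G : P X ×_{X/G} P X → X × X`; such a section is
recorded by a pair of paths `s₁ p`, `s₂ p`, with the orbit of the endpoint of the first
equal to the orbit of the starting point of the second. -/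
def invTCcover (k : ℕ) : Prop :=
  ∃ U : Fin k → Set (X × X),
    (∀ i, IsOpen (U i)) ∧ (⋃ i, U i) = univ ∧
    ∀ i, (∀ g₁ g₂ : G, ∀ p, p ∈ U i → (act g₁ p.1, act g₂ p.2) ∈ U i) ∧
      ∃ s₁ s₂ : X × X → C(I, X),
        ContinuousOn s₁ (U i) ∧ ContinuousOn s₂ (U i) ∧
        (∀ p ∈ U i, s₁ p 0 = p.1 ∧ s₂ p 1 = p.2 ∧
          orbit act (s₁ p 1) = orbit act (s₂ p 0)) ∧
        (∀ g₁ g₂ : G, ∀ p, p ∈ U i → ∀ t : I,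
          s₁ (act g₁ p.1, act g₂ p.2) t = act g₁ (s₁ p t) ∧
          s₂ (act g₁ p.1, act g₂ p.2) t = act g₂ (s₂ p t))

/-- Invariant topological complexity `TC^G` of Lubawski and Marzantowicz. -/
noncomputable def invTC : ℕ∞ := minCover (invTCcover act)

/-- The invariant open set `U` is `G`-compressible into `A`: the inclusion `U ↪ X` is
`G`-equivariantly homotopic to a `G`-map with values in `A`. -/
def GCompressible (A : Set X) (U : Set X) : Prop :=
  (∀ g x, x ∈ U → act g x ∈ U) ∧
  ∃ H : X × I → X,
    ContinuousOn H (U ×ˢ (univ : Set I)) ∧ (∀ x ∈ U, H (x, 0) = x) ∧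
    (∀ g x, x ∈ U → ∀ t : I, H (act g x, t) = act g (H (x, t))) ∧
    (∀ x ∈ U, H (x, 1) ∈ A)

/-- A `G`-categorical set: compressible into a single orbit. -/
def GCategorical (U : Set X) : Prop :=
  ∃ x₀ : X, GCompressible act (orbit act x₀) U

/-- `X` can be covered by `k` open `G`-categorical sets. -/
def catGCover (k : ℕ) : Prop :=
  ∃ U : Fin k → Set X,
    (∀ i, IsOpen (U i)) ∧ (⋃ i, U i) = univ ∧ ∀ i, GCategorical act (U i)

/-- Equivariant Lusternik–Schnirelmann category `cat_G`. -/
noncomputable def catG : ℕ∞ := minCover (catGCover act)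

/-- `X` can be covered by `k` open sets `G`-compressible into `{star}`. -/
def pointedCatGCover (star : X) (k : ℕ) : Prop :=
  ∃ U : Fin k → Set X,
    (∀ i, IsOpen (U i)) ∧ (⋃ i, U i) = univ ∧
    ∀ i, GCompressible act {star} (U i)

/-- The pointed equivariant category `_{{⋆}}cat_G(X)`. -/
noncomputable def pointedCatG (star : X) : ℕ∞ := minCover (pointedCatGCover act star)

/-- `X` is `G`-contractible: the identity is `G`-homotopic to a map with values in a
single orbit. -/
def GContractible : Prop :=
  ∃ H : X × I → X,
    Continuous H ∧ (∀ x, H (x, 0) = x) ∧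
    (∀ g x, ∀ t : I, H (act g x, t) = act g (H (x, t))) ∧
    ∃ x₀ : X, ∀ x, H (x, 1) ∈ orbit act x₀

end Equivariant

/-- The orbit space `X/G` with the quotient topology. -/
abbrev OrbitSpace (act : G → X → X) : Type _ := Quot (fun x y => ∃ g, act g x = y)

end PaperTC
namespace PaperTC

/-- The unit sphere `S^n ⊆ ℝ^{n+1}` (with the Euclidean metric). -/
abbrev Sph (n : ℕ) : Set (EuclideanSpace ℝ (Fin (n + 1))) := Metric.sphere 0 1

/-- The action of `G` on the unit sphere `S^n` obtained by restricting an orthogonal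
representation of `G` on `ℝ^{n+1}`. -/
noncomputable def sphereAct {G : Type*} [Monoid G] {n : ℕ}
    (ρ : G →* (EuclideanSpace ℝ (Fin (n + 1)) ≃ₗᵢ[ℝ] EuclideanSpace ℝ (Fin (n + 1)))) :
    G → ↥(Sph n) → ↥(Sph n) := fun g x =>
  ⟨ρ g x, mem_sphere_zero_iff_norm.mpr (by
    rw [(ρ g).norm_map]; exact mem_sphere_zero_iff_norm.mp x.2)⟩

end PaperTC

open PaperTC

/-!
Lower bound: a motion planner on all of `X × X` contracts `X`, and the sphere is not contractible.
A contraction would give a map `f : E → E` without zeros which is the identity far from the origin;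
after smoothing and normalising, `f` retracts a ball `U` onto its boundary. The integral over `U` of
the Jacobian determinant of `x ↦ x + t (f x - x)` is a polynomial in `t`. For small `t` this map is
a diffeomorphism of `U`, so the polynomial is the constant `vol U`. At `t = 1` it vanishes, because
a map of constant norm has singular derivative.

Upper bound: an equivariant self-map `b` of `S^n` with `b y ⟂ y` makes the two sets `x ≠ -y` and
`x ≠ y` suffice. On the first, follow the straight segment from `x` to `y`, pushed radially to the
sphere; on the second, pass through `x, -y, b y, y`, no two consecutive points being antipodal.
Such a `b` is the normalisation of an injective skew-adjoint `B` commuting with a generator `T` of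
the group. The skew-adjoint operator `T - T*` commutes with `T`, and its kernel is the sum of the
eigenspaces of `T` for `1` and `-1`. Since a skew-adjoint operator has even rank, both eigenspaces
are even-dimensional, hence carry complex structures, and these are added to `T - T*` to give `B`.
-/

namespace PaperTC

section Analysis

open MeasureTheory Metric Polynomial
open scoped NNReal Topology

theorem exists_polynomial_eval_eq_integral {α : Type*} [MeasurableSpace α] {μ : Measure α} {d : ℕ}
    (q : α → ℝ[X]) (hdeg : ∀ x, (q x).natDegree ≤ d)
    (hint : ∀ t, Integrable (fun x => (q x).eval t) μ) :
    ∃ Q : ℝ[X], ∀ t, Q.eval t = ∫ x, (q x).eval t ∂μ := by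
  let nodes := Finset.range (d + 1)
  let v : ℕ → ℝ := Nat.cast
  have hq (x : α) : q x = Lagrange.interpolate nodes v fun i => (q x).eval (v i) := by
    refine Lagrange.eq_interpolate Nat.cast_injective.injOn ?_
    rw [Finset.card_range]
    exact degree_le_natDegree.trans_lt (by exact_mod_cast Nat.lt_succ_of_le (hdeg x))
  refine ⟨Lagrange.interpolate nodes v fun i => ∫ x, (q x).eval (v i) ∂μ, fun t => ?_⟩
  calc (Lagrange.interpolate nodes v fun i => ∫ x, (q x).eval (v i) ∂μ).eval t
      = ∑ i ∈ nodes, ∫ x, (q x).eval (v i) * (Lagrange.basis nodes v i).eval t ∂μ := by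
        simp only [Lagrange.interpolate_apply, eval_finsetSum, eval_mul, eval_C,
          integral_mul_const]
    _ = ∫ x, ∑ i ∈ nodes, (q x).eval (v i) * (Lagrange.basis nodes v i).eval t ∂μ :=
        (integral_finsetSum _ fun i _ => (hint (v i)).mul_const _).symm
    _ = ∫ x, (q x).eval t ∂μ := by
        refine integral_congr_ae (.of_forall fun x => ?_)
        beta_reduce
        conv_rhs => rw [hq x]
        simp only [Lagrange.interpolate_apply, eval_finsetSum, eval_mul, eval_C]

section Det

variable {E : Type*} [NormedAddCommGroup E] [NormedSpace ℝ E] [FiniteDimensional ℝ E]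

theorem exists_polynomial_eval_eq_det_one_add_smul (A : E →L[ℝ] E) :
    ∃ q : ℝ[X], q.natDegree ≤ Module.finrank ℝ E ∧ ∀ t, q.eval t = (1 + t • A).det := by
  let b := Module.finBasis ℝ E
  let M := LinearMap.toMatrix b b (A : E →ₗ[ℝ] E)
  refine ⟨((X : ℝ[X]) • M.map C + (1 : Matrix _ _ ℝ).map C).det, ?_, fun t => ?_⟩
  · simpa only [Fintype.card_fin] using natDegree_det_X_add_C_le M 1
  · have hM : M.map (t * ·) + 1 = LinearMap.toMatrix b b (1 + t • (A : E →ₗ[ℝ] E)) := by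
      rw [map_add, LinearMap.toMatrix_one, map_smul, add_comm]
      rfl
    rw [ContinuousLinearMap.det, ← LinearMap.det_toMatrix b, ← coe_evalRingHom, RingHom.map_det]
    refine congrArg Matrix.det (Eq.trans ?_ hM)
    ext i j
    simp only [RingHom.mapMatrix_apply, Matrix.map_apply, Matrix.add_apply, Matrix.smul_apply,
      smul_eq_mul, coe_evalRingHom, eval_add, eval_mul, eval_X, eval_C]

theorem det_one_add_pos_of_norm_lt_one {A : E →L[ℝ] E} (hA : ‖A‖ < 1) : 0 < (1 + A).det := by
  have : CompleteSpace E := FiniteDimensional.complete ℝ E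
  have hne : ∀ s ∈ Icc (0 : ℝ) 1, (1 + s • A).det ≠ 0 := by
    intro s hs
    have hsA : ‖-(s • A)‖ < 1 := by
      rw [norm_neg, norm_smul, Real.norm_of_nonneg hs.1]
      exact (mul_le_of_le_one_left (norm_nonneg A) hs.2).trans_lt hA
    have hunit : IsUnit (1 + s • A) := by
      simpa only [sub_neg_eq_add] using isUnit_one_sub_of_norm_lt_one hsA
    exact ((hunit.map ContinuousLinearMap.toLinearMapRingHom).map LinearMap.det).ne_zero
  have hcont : Continuous fun s : ℝ => (1 + s • A).det :=
    ContinuousLinearMap.continuous_det.comp (by fun_prop)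
  have hzero : (1 + (0 : ℝ) • A).det = 1 := by
    rw [zero_smul, add_zero]
    exact LinearMap.det_id
  by_contra! hneg
  obtain ⟨s, hs, hs0⟩ := intermediate_value_Icc' zero_le_one hcont.continuousOn
    (show (0 : ℝ) ∈ Icc (1 + (1 : ℝ) • A).det (1 + (0 : ℝ) • A).det by
      rw [one_smul, hzero]
      exact ⟨hneg, zero_le_one⟩)
  exact hne s hs hs0

end Det

theorem image_eq_self_of_isOpen_image {X : Type*} [TopologicalSpace X] [T2Space X] {U : Set X}
    {h : X → X} (hU : IsPreconnected U) (hUo : IsOpen U) (hUc : IsCompact (closure U))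
    (hcont : ContinuousOn h (closure U)) (hmaps : MapsTo h U U) (hopen : IsOpen (h '' U))
    (hfr : EqOn h id (frontier U)) : h '' U = U := by
  rcases U.eq_empty_or_nonempty with rfl | hne
  · exact image_empty h
  refine hmaps.image_subset.antisymm (hU.subset_of_closure_inter_subset hopen ?_ ?_)
  · rw [inter_eq_right.2 hmaps.image_subset]
    exact hne.image h
  · rintro _ ⟨hy, hyU⟩
    obtain ⟨x, hx, rfl⟩ :=
      closure_minimal (image_mono subset_closure) (hUc.image_of_continuousOn hcont).isClosed hy
    by_contra hxU
    have hxfr : x ∈ frontier U := ⟨hx, fun hxi => hxU (mem_image_of_mem h (interior_subset hxi))⟩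
    rw [hfr hxfr] at hyU
    exact hxU (mem_image_of_mem h hyU)

section DegreeFormula

variable {E : Type*} [NormedAddCommGroup E] [NormedSpace ℝ E]

theorem isOpen_image_of_approximatesLinearOn_refl [CompleteSpace E] {h : E → E} {U : Set E}
    {c : ℝ≥0} (hU : IsOpen U) (hc : c < 1)
    (hh : ApproximatesLinearOn h (ContinuousLinearEquiv.refl ℝ E : E →L[ℝ] E) U c) :
    IsOpen (h '' U) := by
  rcases subsingleton_or_nontrivial E with _ | _
  · exact isOpen_discrete _
  refine hh.open_image (ContinuousLinearEquiv.refl ℝ E).toNonlinearRightInverse hU (Or.inr ?_)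
  have hone : (ContinuousLinearEquiv.refl ℝ E).toNonlinearRightInverse.nnnorm = 1 :=
    ContinuousLinearMap.nnnorm_id
  rwa [hone, inv_one]

theorem injOn_of_approximatesLinearOn_refl {h : E → E} {U : Set E} {c : ℝ≥0} (hc : c < 1)
    (hh : ApproximatesLinearOn h (ContinuousLinearEquiv.refl ℝ E : E →L[ℝ] E) U c) :
    InjOn h U := by
  rcases subsingleton_or_nontrivial E with _ | _
  · exact injOn_of_subsingleton h U
  refine hh.injOn (Or.inr ?_)
  rw [ContinuousLinearEquiv.refl_symm, ContinuousLinearEquiv.coe_refl,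
    ContinuousLinearMap.nnnorm_id, inv_one]
  exact hc

variable {f : E → E} {U : Set E}

theorem approximatesLinearOn_add_smul_sub (hf : Differentiable ℝ f) (hU : Convex ℝ U) {L t : ℝ≥0}
    (hL : ∀ x ∈ U, ‖fderiv ℝ f x - 1‖ ≤ L) :
    ApproximatesLinearOn (fun x => x + (t : ℝ) • (f x - x))
      (ContinuousLinearEquiv.refl ℝ E : E →L[ℝ] E) U (t * L) := by
  intro x hx y hy
  have hlip : ‖f x - f y - (1 : E →L[ℝ] E) (x - y)‖ ≤ L * ‖x - y‖ :=
    hU.norm_image_sub_le_of_norm_hasFDerivWithin_le'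
      (fun z _ => (hf z).hasFDerivAt.hasFDerivWithinAt) hL hy hx
  calc ‖x + (t : ℝ) • (f x - x) - (y + (t : ℝ) • (f y - y)) - (x - y)‖
      = ‖(t : ℝ) • (f x - f y - (x - y))‖ := by congr 1; module
    _ = t * ‖f x - f y - (x - y)‖ := by rw [norm_smul, NNReal.norm_eq]
    _ ≤ t * (L * ‖x - y‖) := by gcongr; exact hlip
    _ = (t * L : ℝ≥0) * ‖x - y‖ := by push_cast; ring

theorem mapsTo_add_smul_sub (hU : Convex ℝ U) (hUo : IsOpen U) (hf : MapsTo f U (closure U))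
    {t : ℝ} (ht₀ : 0 ≤ t) (ht₁ : t < 1) : MapsTo (fun x => x + t • (f x - x)) U U := by
  intro x hx
  have hmem := hU.combo_interior_closure_mem_interior (a := 1 - t) (b := t)
    (hUo.interior_eq.symm ▸ hx) (hf hx) (sub_pos.2 ht₁) ht₀ (sub_add_cancel 1 t)
  rw [hUo.interior_eq] at hmem
  convert hmem using 1
  module

variable [FiniteDimensional ℝ E] [MeasurableSpace E] [BorelSpace E] {μ : Measure E}
  [μ.IsAddHaarMeasure]

theorem setIntegral_det_eq_measureReal_image {h : E → E} {h' : E → E →L[ℝ] E} {U : Set E}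
    (hU : MeasurableSet U) (hh : ∀ x ∈ U, HasFDerivWithinAt h (h' x) U x) (hinj : InjOn h U)
    (hpos : ∀ x ∈ U, 0 < (h' x).det) : ∫ x in U, (h' x).det ∂μ = μ.real (h '' U) := by
  have hcov := integral_image_eq_integral_abs_det_fderiv_smul μ hU hh hinj fun _ => (1 : ℝ)
  rw [setIntegral_const, smul_eq_mul, mul_one] at hcov
  rw [hcov]
  refine setIntegral_congr_fun hU fun x hx => ?_
  simp only [smul_eq_mul, mul_one, abs_of_pos (hpos x hx)]

theorem setIntegral_det_add_smul_sub_eq_measureReal (hU : Convex ℝ U) (hUo : IsOpen U)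
    (hUb : Bornology.IsBounded U) (hf : Differentiable ℝ f) (hfU : MapsTo f U (closure U))
    (hfr : EqOn f id (frontier U)) {L t : ℝ≥0} (hL : ∀ x ∈ U, ‖fderiv ℝ f x - 1‖ ≤ L)
    (ht : t < 1) (htL : t * L < 1) :
    ∫ x in U, (1 + (t : ℝ) • (fderiv ℝ f x - 1)).det ∂μ = μ.real U := by
  let h : E → E := fun x => x + (t : ℝ) • (f x - x)
  have happrox : ApproximatesLinearOn h (ContinuousLinearEquiv.refl ℝ E : E →L[ℝ] E) U (t * L) :=
    approximatesLinearOn_add_smul_sub hf hU hL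
  have hderiv (x : E) : HasFDerivAt h (1 + (t : ℝ) • (fderiv ℝ f x - 1)) x :=
    (hasFDerivAt_id x).add (((hf x).hasFDerivAt.sub (hasFDerivAt_id x)).const_smul (t : ℝ))
  have hpos (x : E) (hx : x ∈ U) : 0 < (1 + (t : ℝ) • (fderiv ℝ f x - 1)).det := by
    refine det_one_add_pos_of_norm_lt_one ?_
    rw [norm_smul, NNReal.norm_eq]
    exact (mul_le_mul_of_nonneg_left (hL x hx) t.2).trans_lt (mod_cast htL)
  have himage : h '' U = U := by
    have : ProperSpace E := FiniteDimensional.proper_real E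
    refine image_eq_self_of_isOpen_image hU.isPreconnected hUo hUb.isCompact_closure
      (fun x _ => (hderiv x).continuousAt.continuousWithinAt)
      (mapsTo_add_smul_sub hU hUo hfU t.2 ht)
      (isOpen_image_of_approximatesLinearOn_refl hUo htL happrox) fun x hx => ?_
    simp only [h, hfr hx, id_eq, sub_self, smul_zero, add_zero]
  rw [setIntegral_det_eq_measureReal_image hUo.measurableSet
    (fun x _ => (hderiv x).hasFDerivWithinAt)
    (injOn_of_approximatesLinearOn_refl htL happrox) hpos, himage]

theorem setIntegral_det_fderiv_eq_measureReal (hU : Convex ℝ U) (hUo : IsOpen U)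
    (hUb : Bornology.IsBounded U) (hf : ContDiff ℝ 1 f) (hfU : MapsTo f U (closure U))
    (hfr : EqOn f id (frontier U)) : ∫ x in U, (fderiv ℝ f x).det ∂μ = μ.real U := by
  have : ProperSpace E := FiniteDimensional.proper_real E
  have hcont : Continuous fun x => fderiv ℝ f x - 1 :=
    (hf.continuous_fderiv one_ne_zero).sub continuous_const
  obtain ⟨L, hL⟩ : ∃ L : ℝ≥0, ∀ x ∈ U, ‖fderiv ℝ f x - 1‖ ≤ L := by
    obtain ⟨L, hL⟩ := hUb.isCompact_closure.exists_bound_of_continuousOn hcont.continuousOn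
    exact ⟨L.toNNReal, fun x hx => (hL x (subset_closure hx)).trans (Real.le_coe_toNNReal L)⟩
  choose q hqdeg hq using fun x => exists_polynomial_eval_eq_det_one_add_smul (fderiv ℝ f x - 1)
  have hint (t : ℝ) : Integrable (fun x => (q x).eval t) (μ.restrict U) := by
    simp only [hq]
    have hdet : Continuous fun x => (1 + t • (fderiv ℝ f x - 1)).det :=
      ContinuousLinearMap.continuous_det.comp (by fun_prop)
    exact (hdet.continuousOn.integrableOn_compact hUb.isCompact_closure).mono_set subset_closure
  obtain ⟨Q, hQ⟩ := exists_polynomial_eval_eq_integral q hqdeg hint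
  -- `Q` is constant for small `t`, hence everywhere; the claim is its value at `t = 1`.
  have hsmall : {t : ℝ | Q.eval t = (C (μ.real U)).eval t}.Infinite := by
    refine (Ioo_infinite (a := 0) (b := 1 / (L + 1 : ℝ)) (by positivity)).mono fun t ht => ?_
    lift t to ℝ≥0 using ht.1.le
    have htL : (t : ℝ) * (L + 1) < 1 := (lt_div_iff₀ (by positivity)).1 ht.2
    have htL' : t * (L + 1) < 1 := mod_cast htL
    rw [mem_ofPred_eq, hQ, eval_C]
    simp only [hq]
    refine setIntegral_det_add_smul_sub_eq_measureReal hU hUo hUb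
      (hf.differentiable one_ne_zero) hfU hfr hL (lt_of_le_of_lt ?_ htL')
      (lt_of_le_of_lt ?_ htL')
    · exact le_mul_of_one_le_right' (le_add_of_nonneg_left zero_le)
    · exact mul_le_mul_right (le_add_of_nonneg_right zero_le_one) t
  have hone := hQ 1
  rw [eq_of_infinite_eval_eq Q _ hsmall, eval_C] at hone
  simpa only [hq, one_smul, add_sub_cancel] using hone.symm

end DegreeFormula

section NoRetraction

variable {E : Type*} [NormedAddCommGroup E] [InnerProductSpace ℝ E] [FiniteDimensional ℝ E]

theorem det_eq_zero_of_norm_eventuallyEq_const {f : E → E} {f' : E →L[ℝ] E} {x : E} {r : ℝ}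
    (hf : HasFDerivAt f f' x) (hnorm : (‖f ·‖) =ᶠ[𝓝 x] fun _ => r) (hx : f x ≠ 0) :
    f'.det = 0 := by
  by_contra hdet
  obtain ⟨v, hv⟩ : ∃ v, f' v = f x :=
    (LinearMap.equivOfDetNeZero (f' : E →ₗ[ℝ] E) hdet).surjective (f x)
  have hconst : HasFDerivAt (‖f ·‖ ^ 2) (0 : E →L[ℝ] ℝ) x :=
    (hasFDerivAt_const (r ^ 2) x).congr_of_eventuallyEq (hnorm.pow_const 2)
  have hzero := congrArg (· v) (hf.norm_sq.unique hconst)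
  exact hx (by simpa [hv] using hzero)

theorem exists_eq_zero_of_contDiff {f : E → E} {r : ℝ} (hr : 0 < r) (hf : ContDiff ℝ 1 f)
    (hfr : EqOn f id (sphere 0 r)) : ∃ x, f x = 0 := by
  by_contra! hne
  borelize E
  let u : E → E := fun x => (r / ‖f x‖) • f x
  have hnorm (x : E) : ‖u x‖ = r := by
    rw [norm_smul, norm_div, norm_norm, Real.norm_of_nonneg hr.le,
      div_mul_cancel₀ _ (norm_ne_zero_iff.2 (hne x))]
  have hu : ContDiff ℝ 1 u :=
    (contDiff_const.div (hf.norm ℝ hne) fun x => norm_ne_zero_iff.2 (hne x)).smul hf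
  have hdet (x : E) : (fderiv ℝ u x).det = 0 :=
    det_eq_zero_of_norm_eventuallyEq_const (hu.differentiable one_ne_zero x).hasFDerivAt
      (.of_forall hnorm) (norm_ne_zero_iff.1 ((hnorm x).trans_ne hr.ne'))
  have hvol : ∫ x in ball 0 r, (fderiv ℝ u x).det = volume.real (ball (0 : E) r) := by
    refine setIntegral_det_fderiv_eq_measureReal (convex_ball 0 r) isOpen_ball isBounded_ball hu
      (fun x _ => ?_) fun x hx => ?_
    · rw [closure_ball 0 hr.ne', mem_closedBall_zero_iff]
      exact (hnorm x).le
    · rw [frontier_ball 0 hr.ne'] at hx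
      simp only [u, hfr hx, id_eq, mem_sphere_zero_iff_norm.1 hx, div_self hr.ne', one_smul]
  simp only [hdet, integral_zero] at hvol
  exact (ENNReal.toReal_pos (measure_ball_pos volume 0 hr).ne' measure_ball_lt_top.ne).ne hvol

theorem exists_eq_zero_of_continuous {g : E → E} {r : ℝ} (hg : Continuous g)
    (hgr : ∀ x, r ≤ ‖x‖ → g x = x) : ∃ x, g x = 0 := by
  by_contra! hne
  let R := max r 0
  have hfar : ContDiffOn ℝ 1 g {x | R < ‖x‖} := contDiffOn_id.congr fun x hx =>
    hgr x ((le_max_left r 0).trans (le_of_lt hx))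
  have hnhds : {x : E | R < ‖x‖} ∈ 𝓝ˢ {x | R + 1 ≤ ‖x‖} :=
    (isOpen_lt continuous_const continuous_norm).mem_nhdsSet.2 fun x hx =>
      (lt_add_one R).trans_le hx
  -- A smooth map closer to `g` than `‖g‖` has no zero either.
  obtain ⟨f, hf, hfg, hfeq, -⟩ := hg.exists_contDiff_approx_and_eqOn 1 hg.norm
    (fun x => norm_pos_iff.2 (hne x)) (isClosed_le continuous_const continuous_norm) hnhds hfar
  obtain ⟨x, hx⟩ := exists_eq_zero_of_contDiff (r := R + 1) (by positivity) hf fun x hx => by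
    have hxR : R + 1 = ‖x‖ := (mem_sphere_zero_iff_norm.1 hx).symm
    rw [hfeq hxR.le]
    exact hgr x (by linarith [le_max_left r 0])
  have hlt := hfg x
  rw [hx, dist_zero_left] at hlt
  exact hlt.false

/-- Radial projection to the unit sphere of a map to `E` without zeros. -/
noncomputable def sphereNormalize {Z : Type*} [TopologicalSpace Z] (f : C(Z, E))
    (hf : ∀ z, f z ≠ 0) : C(Z, sphere (0 : E) 1) where
  toFun z := ⟨‖f z‖⁻¹ • f z, mem_sphere_zero_iff_norm.2 (norm_smul_inv_norm (𝕜 := ℝ) (hf z))⟩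
  continuous_toFun := ((f.continuous.norm.inv₀ fun z => norm_ne_zero_iff.2 (hf z)).smul
    f.continuous).subtype_mk _

theorem not_contractibleSpace_sphere : ¬ ContractibleSpace (sphere (0 : E) 1) := by
  intro _
  obtain ⟨y₀, ⟨H⟩⟩ := id_nullhomotopic (sphere (0 : E) 1)
  let A : Set E := {x | 1 ≤ ‖x‖}
  have hA : IsClosed A := isClosed_le continuous_const continuous_norm
  let ν : C(A, sphere (0 : E) 1) := sphereNormalize ⟨Subtype.val, continuous_subtype_val⟩
    fun x => norm_pos_iff.1 (zero_lt_one.trans_le x.2)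
  -- Run the contraction from `y₀` at radius `1` back to the identity at radius `2`.
  let S : C(A, sphere (0 : E) 1) := ⟨fun x => H (projIcc 0 1 zero_le_one (2 - ‖(x : E)‖), ν x),
    H.continuous.comp <| (continuous_projIcc.comp (by fun_prop)).prodMk ν.continuous⟩
  have hS₁ (x : A) (hx : ‖(x : E)‖ = 1) : S x = y₀ := by
    rw [ContinuousMap.coe_mk, projIcc_of_right_le _ (by linarith)]
    exact H.apply_one (ν x)
  have hS₂ (x : A) (hx : 2 ≤ ‖(x : E)‖) : S x = ν x := by
    rw [ContinuousMap.coe_mk, projIcc_of_le_left _ (sub_nonpos.2 hx)]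
    exact H.apply_zero (ν x)
  let c : C(A, E) := ⟨fun x => ‖(x : E)‖ • (S x : E), by fun_prop⟩
  obtain ⟨C, hC⟩ := c.exists_restrict_eq hA
  have hCA (x : E) (hx : 1 ≤ ‖x‖) : C x = ‖x‖ • (S ⟨x, hx⟩ : E) := DFunLike.congr_fun hC ⟨x, hx⟩
  have hg : Continuous fun x : E => if 1 ≤ ‖x‖ then C x else (y₀ : E) :=
    C.continuous.if_le continuous_const continuous_const continuous_norm fun x hx => by
      rw [hCA x hx.le, hS₁ _ hx.symm, ← hx, one_smul]
  obtain ⟨x, hx⟩ := exists_eq_zero_of_continuous (r := 2) hg fun x hx => by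
    have hx₁ : 1 ≤ ‖x‖ := one_le_two.trans hx
    rw [if_pos hx₁, hCA x hx₁, hS₂ _ hx]
    exact smul_inv_smul₀ (one_pos.trans_le hx₁).ne' x
  have hne (y : sphere (0 : E) 1) : (y : E) ≠ 0 := ne_of_mem_sphere y.2 one_ne_zero
  split_ifs at hx with hx₁
  · rw [hCA x hx₁] at hx
    exact smul_ne_zero (one_pos.trans_le hx₁).ne' (hne _) hx
  · exact hne y₀ hx

end NoRetraction

end Analysis

section Covers

variable {G X : Type*} [TopologicalSpace X] {act : G → X → X}

theorem contractibleSpace_of_eqTCcover_one [Nonempty X] (h : eqTCcover act 1) :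
    ContractibleSpace X := by
  obtain ⟨U, -, hU, hplan⟩ := h
  obtain ⟨-, s, hs, hend, -⟩ := hplan 0
  have huniv : U 0 = univ := by rw [← hU]; exact (ciSup_unique (s := U)).symm
  simp only [huniv, continuousOn_univ, mem_univ, forall_const] at hs hend
  obtain ⟨y₀⟩ := ‹Nonempty X›
  have hpath : Continuous fun q : I × X => s (q.2, y₀) q.1 := by fun_prop
  exact contractible_iff_id_nullhomotopic X |>.2 ⟨y₀, ⟨⟨⟨_, hpath⟩, fun x => (hend (x, y₀)).1,
    fun x => (hend (x, y₀)).2⟩⟩⟩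

theorem minCover_eq {P : ℕ → Prop} {m : ℕ} (hm : 1 ≤ m) (hP : P m)
    (hmin : ∀ k, 1 ≤ k → k < m → ¬ P k) : minCover P = m := by
  refine le_antisymm (sInf_le ⟨m, rfl, hm, hP⟩) (le_sInf ?_)
  rintro _ ⟨k, rfl, hk, hPk⟩
  exact Nat.cast_le.2 (not_lt.1 fun hkm => hmin k hk hkm hPk)

theorem eqTC_eq_two [Nonempty X] (hX : ¬ ContractibleSpace X) (h : eqTCcover act 2) :
    eqTC act = 2 :=
  minCover_eq (m := 2) one_le_two h fun k hk hk2 hPk => by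
    obtain rfl : k = 1 := by omega
    exact hX (contractibleSpace_of_eqTCcover_one hPk)

/-- `U` is invariant under the diagonal action and carries an equivariant motion planner, that is,
`U` may occur as a member of a cover in `eqTCcover`. -/
def HasEquivariantPlanner (act : G → X → X) (U : Set (X × X)) : Prop :=
  (∀ g p, p ∈ U → (act g p.1, act g p.2) ∈ U) ∧
    ∃ s : X × X → C(I, X),
      ContinuousOn s U ∧
      (∀ p ∈ U, s p 0 = p.1 ∧ s p 1 = p.2) ∧
      (∀ g p, p ∈ U → ∀ t : I, s (act g p.1, act g p.2) t = act g (s p t))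

theorem eqTCcover_two {U V : Set (X × X)} (hU : IsOpen U) (hV : IsOpen V) (hUV : U ∪ V = univ)
    (hUs : HasEquivariantPlanner act U) (hVs : HasEquivariantPlanner act V) :
    eqTCcover act 2 := by
  refine ⟨![U, V], Fin.forall_fin_two.2 ⟨hU, hV⟩, ?_, Fin.forall_fin_two.2 ⟨hUs, hVs⟩⟩
  exact eq_univ_of_forall fun p => mem_iUnion.2 (Fin.exists_fin_two.2 (hUV.ge (mem_univ p)))

/-- Continuous maps intertwining two families of self-maps indexed by `G`. The families need not
be group actions, as in the definition of `eqTC`. -/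
def IsEquivariantMap {Y : Type*} [TopologicalSpace Y] (actY : G → Y → Y) (act : G → X → X)
    (f : C(Y, X)) : Prop :=
  ∀ g y, f (actY g y) = act g (f y)

/-- The diagonal action of `G` on an invariant subset of `X × X`. -/
def diagonalAct (act : G → X → X) {U : Set (X × X)}
    (hU : ∀ g p, p ∈ U → (act g p.1, act g p.2) ∈ U) : G → U → U :=
  fun g p => ⟨(act g p.1.1, act g p.1.2), hU g p p.2⟩

theorem hasEquivariantPlanner_of_homotopicWith {U : Set (X × X)}
    (hU : ∀ g p, p ∈ U → (act g p.1, act g p.2) ∈ U)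
    (h : (ContinuousMap.fst.restrict U).HomotopicWith (ContinuousMap.snd.restrict U)
      (IsEquivariantMap (diagonalAct act hU) act)) :
    HasEquivariantPlanner act U := by
  classical
  obtain ⟨H⟩ := h
  let c : C(U, C(I, X)) := (H.toContinuousMap.comp ContinuousMap.prodSwap).curry
  let s : X × X → C(I, X) := fun p => if hp : p ∈ U then c ⟨p, hp⟩ else ContinuousMap.const I p.1
  have hs (p : U) : s p = c p := dif_pos p.2
  refine ⟨hU, s, ?_, fun p hp => ?_, fun g p hp t => ?_⟩
  · rw [continuousOn_iff_continuous_domRestrict]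
    exact c.continuous.congr fun p => (hs p).symm
  · rw [hs ⟨p, hp⟩]
    exact ⟨H.apply_zero ⟨p, hp⟩, H.apply_one ⟨p, hp⟩⟩
  · rw [hs ⟨p, hp⟩, hs ⟨_, hU g p hp⟩]
    exact H.prop t g ⟨p, hp⟩

end Covers

section StraightLine

open Metric

theorem lineMap_ne_zero_of_norm_eq {E : Type*} [NormedAddCommGroup E] [NormedSpace ℝ E] {x y : E}
    (hxy : ‖x‖ = ‖y‖) (hne : x ≠ -y) (t : ℝ) : AffineMap.lineMap x y t ≠ 0 := by
  intro h
  rw [AffineMap.lineMap_apply_module, add_eq_zero_iff_eq_neg, ← smul_neg] at h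
  have hx : ‖x‖ ≠ 0 := fun hx => hne <| by
    rw [norm_eq_zero.1 hx, norm_eq_zero.1 (hxy.symm.trans hx), neg_zero]
  have hnorm := congrArg norm h
  rw [norm_smul, norm_smul, norm_neg, ← hxy] at hnorm
  have habs : |1 - t| = |t| := mul_right_cancel₀ hx hnorm
  obtain ht | ht := abs_eq_abs.1 habs
  · rw [ht] at h
    exact hne (smul_right_injective E (by linarith : t ≠ 0) h)
  · linarith

variable {G Y : Type*} [Monoid G] [TopologicalSpace Y] {actY : G → Y → Y} {n : ℕ}
  {ρ : G →* (EuclideanSpace ℝ (Fin (n + 1)) ≃ₗᵢ[ℝ] EuclideanSpace ℝ (Fin (n + 1)))}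

theorem homotopicWith_of_forall_ne_neg {f₀ f₁ : C(Y, Sph n)}
    (h₀ : IsEquivariantMap actY (sphereAct ρ) f₀) (h₁ : IsEquivariantMap actY (sphereAct ρ) f₁)
    (hne : ∀ y, f₀ y ≠ -f₁ y) :
    f₀.HomotopicWith f₁ (IsEquivariantMap actY (sphereAct ρ)) := by
  let ℓ : C(I × Y, EuclideanSpace ℝ (Fin (n + 1))) :=
    ⟨fun q => AffineMap.lineMap (f₀ q.2 : EuclideanSpace ℝ (Fin (n + 1))) (f₁ q.2) (q.1 : ℝ),
      by fun_prop⟩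
  have hℓ (q : I × Y) : ℓ q ≠ 0 := lineMap_ne_zero_of_norm_eq
    ((norm_eq_of_mem_sphere _).trans (norm_eq_of_mem_sphere _).symm)
    (fun h => hne q.2 (Subtype.ext h)) q.1
  have hℓG (g : G) (t : I) (y : Y) : ℓ (t, actY g y) = ρ g (ℓ (t, y)) := by
    simp only [ℓ, ContinuousMap.coe_mk, AffineMap.lineMap_apply_module, map_add, map_smul, h₀ g y,
      h₁ g y]
    rfl
  refine ⟨⟨⟨sphereNormalize ℓ hℓ, fun y => Subtype.ext ?_, fun y => Subtype.ext ?_⟩,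
    fun t g y => Subtype.ext ?_⟩⟩
  · simp [sphereNormalize, ℓ]
  · simp [sphereNormalize, ℓ]
  · simp [sphereNormalize, hℓG, sphereAct]

theorem sphereAct_neg (g : G) (x : Sph n) : sphereAct ρ g (-x) = -sphereAct ρ g x :=
  Subtype.ext (map_neg (ρ g) (x : EuclideanSpace ℝ (Fin (n + 1))))

theorem sphereAct_injective (g : G) : Function.Injective (sphereAct ρ g) := fun _ _ h =>
  Subtype.ext ((ρ g).injective (congrArg Subtype.val h))

theorem hasEquivariantPlanner_ne_neg :
    HasEquivariantPlanner (sphereAct ρ) {p : Sph n × Sph n | p.1 ≠ -p.2} := by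
  refine hasEquivariantPlanner_of_homotopicWith (fun g p hp => ?_) ?_
  · rw [mem_ofPred_eq, ← sphereAct_neg]
    exact (sphereAct_injective g).ne hp
  · exact homotopicWith_of_forall_ne_neg (fun _ _ => rfl) (fun _ _ => rfl) Subtype.prop

theorem hasEquivariantPlanner_ne {b : C(Sph n, Sph n)}
    (hb : IsEquivariantMap (sphereAct ρ) (sphereAct ρ) b) (hbne : ∀ y, b y ≠ y)
    (hbneg : ∀ y, b y ≠ -y) :
    HasEquivariantPlanner (sphereAct ρ) {p : Sph n × Sph n | p.1 ≠ p.2} := by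
  let U : Set (Sph n × Sph n) := {p | p.1 ≠ p.2}
  have hU (g : G) (p : Sph n × Sph n) (hp : p ∈ U) : (sphereAct ρ g p.1, sphereAct ρ g p.2) ∈ U :=
    (sphereAct_injective g).ne hp
  let fst : C(U, Sph n) := ContinuousMap.fst.restrict U
  let snd : C(U, Sph n) := ContinuousMap.snd.restrict U
  let actU := diagonalAct (sphereAct ρ) hU
  have hfst : IsEquivariantMap actU (sphereAct ρ) fst := fun _ _ => rfl
  have hsnd : IsEquivariantMap actU (sphereAct ρ) snd := fun _ _ => rfl
  have hnegsnd : IsEquivariantMap actU (sphereAct ρ) (-snd) := fun g p =>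
    (sphereAct_neg g (snd p)).symm
  have hbsnd : IsEquivariantMap actU (sphereAct ρ) (b.comp snd) := fun g p => hb g (snd p)
  have hfst_ne (p : U) : fst p ≠ -(-snd) p := by
    rw [ContinuousMap.neg_apply, neg_neg]
    exact p.2
  have hneg_ne (p : U) : (-snd) p ≠ -b (snd p) := neg_injective.ne (hbne (snd p)).symm
  -- Each map in `fst, -snd, b ∘ snd, snd` avoids the antipode of the next.
  exact hasEquivariantPlanner_of_homotopicWith hU <|
    (homotopicWith_of_forall_ne_neg hfst hnegsnd hfst_ne).trans <|
    (homotopicWith_of_forall_ne_neg hnegsnd hbsnd hneg_ne).trans <|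
    homotopicWith_of_forall_ne_neg hbsnd hsnd fun p => hbneg (snd p)

theorem eqTCcover_sphereAct_two {b : C(Sph n, Sph n)}
    (hb : IsEquivariantMap (sphereAct ρ) (sphereAct ρ) b) (hbne : ∀ y, b y ≠ y)
    (hbneg : ∀ y, b y ≠ -y) : eqTCcover (sphereAct ρ) 2 := by
  refine eqTCcover_two (isOpen_ne_fun continuous_fst continuous_snd.neg)
    (isOpen_ne_fun continuous_fst continuous_snd) (eq_univ_of_forall fun p => ?_)
    hasEquivariantPlanner_ne_neg (hasEquivariantPlanner_ne hb hbne hbneg)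
  simp only [mem_union, mem_ofPred_eq, ne_eq, ← not_and_or]
  rintro ⟨h, h'⟩
  exact ne_neg_of_mem_unit_sphere ℝ p.2 (h'.symm.trans h)

end StraightLine

section SkewAdjoint

open Module
open scoped RealInnerProductSpace

section Star

variable {R A : Type*} [CommRing R] [StarRing R] [TrivialStar R] [Ring A] [StarRing A]
  [Algebra R A] [StarModule R A]

theorem commute_of_mul_eq_smul {u j : A} {c : R} (hu : u ∈ unitary A) (hj : j ∈ skewAdjoint A)
    (hc : c * c = 1) (huj : u * j = c • j) : Commute u j := by
  rw [skewAdjoint.mem_iff] at hj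
  have hstar : j * star u = c • j := by
    simpa [hj] using congrArg star huj
  have hju : j = c • (j * u) := by
    rw [← smul_mul_assoc, ← hstar, mul_assoc, Unitary.star_mul_self_of_mem hu, mul_one]
  calc u * j = c • j := huj
    _ = (c * c) • (j * u) := by rw [mul_smul, ← hju]
    _ = j * u := by rw [hc, one_smul]

theorem sub_star_mem_skewAdjoint (u : A) : u - star u ∈ skewAdjoint A := by
  rw [skewAdjoint.mem_iff, star_sub, star_star, neg_sub]

theorem commute_sub_star {u : A} (hu : u ∈ unitary A) : Commute u (u - star u) := by
  rw [commute_iff_eq, mul_sub, sub_mul, Unitary.mul_star_self_of_mem hu,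
    Unitary.star_mul_self_of_mem hu]

end Star

variable {E : Type*} [NormedAddCommGroup E] [InnerProductSpace ℝ E]

theorem ker_add_eq_inf_of_range_le {A C : E →ₗ[ℝ] E} (h : A.range ≤ C.rangeᗮ) :
    (A + C).ker = A.ker ⊓ C.ker := by
  refine le_antisymm (fun x hx => ?_) fun x hx => ?_
  · have hAC : A x = -C x := eq_neg_of_add_eq_zero_left hx
    have hA : A x = 0 := by
      refine inner_self_eq_zero (𝕜 := ℝ).1 ?_
      nth_rw 1 [hAC]
      rw [inner_neg_left, h (A.mem_range_self x) _ (C.mem_range_self x), neg_zero]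
    exact ⟨hA, by simpa [hA] using hx⟩
  · simp [LinearMap.mem_ker.1 hx.1, LinearMap.mem_ker.1 hx.2]

variable [FiniteDimensional ℝ E]

theorem mem_skewAdjoint_iff_inner {A : E →ₗ[ℝ] E} :
    A ∈ skewAdjoint (E →ₗ[ℝ] E) ↔ ∀ x y, ⟪A x, y⟫ = -⟪x, A y⟫ := by
  rw [skewAdjoint.mem_iff, LinearMap.star_eq_adjoint, eq_comm, LinearMap.eq_adjoint_iff]
  simp only [LinearMap.neg_apply, inner_neg_left, neg_eq_iff_eq_neg]

theorem inner_apply_self_of_mem_skewAdjoint {A : E →ₗ[ℝ] E} (hA : A ∈ skewAdjoint (E →ₗ[ℝ] E))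
    (x : E) : ⟪x, A x⟫ = 0 := by
  have h := mem_skewAdjoint_iff_inner.1 hA x x
  rw [real_inner_comm] at h
  linarith

theorem orthogonal_range_of_mem_skewAdjoint {A : E →ₗ[ℝ] E}
    (hA : A ∈ skewAdjoint (E →ₗ[ℝ] E)) : A.rangeᗮ = A.ker := by
  rw [LinearMap.orthogonal_range, ← LinearMap.star_eq_adjoint, skewAdjoint.mem_iff.1 hA]
  ext x
  simp

theorem even_finrank_of_mem_skewAdjoint {A : E →ₗ[ℝ] E} (hA : A ∈ skewAdjoint (E →ₗ[ℝ] E))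
    (hker : A.ker = ⊥) : Even (finrank ℝ E) := by
  have hadj : A.adjoint.det = A.det := by
    let b := stdOrthonormalBasis ℝ E
    rw [← LinearMap.det_toMatrix b.toBasis, LinearMap.toMatrix_adjoint b b,
      Matrix.det_conjTranspose, star_trivial, LinearMap.det_toMatrix]
  have hdet : A.det ≠ 0 := fun h => (LinearMap.bot_lt_ker_of_det_eq_zero h).ne' hker
  rw [← LinearMap.star_eq_adjoint, skewAdjoint.mem_iff.1 hA, ← neg_one_smul ℝ A,
    LinearMap.det_smul] at hadj
  by_contra hodd
  rw [(Nat.not_even_iff_odd.1 hodd).neg_one_pow] at hadj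
  exact hdet (by linarith)

theorem even_finrank_range_of_mem_skewAdjoint {A : E →ₗ[ℝ] E}
    (hA : A ∈ skewAdjoint (E →ₗ[ℝ] E)) : Even (finrank ℝ A.range) := by
  let A' : A.range →ₗ[ℝ] A.range := A.restrict fun x _ => A.mem_range_self x
  refine even_finrank_of_mem_skewAdjoint (A := A') ?_ ?_
  · exact mem_skewAdjoint_iff_inner.2 fun x y => mem_skewAdjoint_iff_inner.1 hA x y
  · refine LinearMap.ker_eq_bot'.2 fun x hx => ?_
    have hxker : (x : E) ∈ A.rangeᗮ := by
      rw [orthogonal_range_of_mem_skewAdjoint hA]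
      exact congrArg Subtype.val hx
    exact Subtype.ext (inner_self_eq_zero.1 (hxker x x.2))

theorem real_inner_I_smul_left {ι : Type*} [Fintype ι] (x y : EuclideanSpace ℂ ι) :
    ⟪Complex.I • x, y⟫ = -⟪x, Complex.I • y⟫ := by
  rw [PiLp.inner_apply, PiLp.inner_apply, ← Finset.sum_neg_distrib]
  refine Finset.sum_congr rfl fun i _ => ?_
  simp only [PiLp.smul_apply, Complex.inner, smul_eq_mul, map_mul, Complex.conj_I, neg_mul,
    mul_neg, Complex.neg_re, mul_left_comm, mul_assoc]

theorem exists_mem_skewAdjoint_range_eq_top (hE : Even (finrank ℝ E)) :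
    ∃ J ∈ skewAdjoint (E →ₗ[ℝ] E), J.range = ⊤ := by
  obtain ⟨m, hm⟩ := hE
  let F := EuclideanSpace ℂ (Fin m)
  have hF : finrank ℝ E = finrank ℝ F := by
    rw [hm, ← finrank_mul_finrank ℝ ℂ F, Complex.finrank_real_complex, finrank_euclideanSpace_fin,
      two_mul]
  let e : E ≃ₗᵢ[ℝ] F := (stdOrthonormalBasis ℝ E).equiv (stdOrthonormalBasis ℝ F) (finCongr hF)
  let J : E ≃ₗ[ℝ] E := e.toLinearEquiv.trans
    (((LinearEquiv.smulOfNeZero ℂ F Complex.I Complex.I_ne_zero).restrictScalars ℝ).trans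
      e.symm.toLinearEquiv)
  refine ⟨J, mem_skewAdjoint_iff_inner.2 fun x y => ?_, J.range⟩
  calc ⟪J x, y⟫ = ⟪e.symm (Complex.I • e x), y⟫ := rfl
    _ = -⟪x, e.symm (Complex.I • e y)⟫ := by
      rw [← e.inner_map_map, ← e.inner_map_map x, e.apply_symm_apply, e.apply_symm_apply,
        real_inner_I_smul_left]

theorem exists_mem_skewAdjoint_range_eq {W : Submodule ℝ E} (hW : Even (finrank ℝ W)) :
    ∃ J ∈ skewAdjoint (E →ₗ[ℝ] E), J.range = W := by
  obtain ⟨J, hJ, hJW⟩ := exists_mem_skewAdjoint_range_eq_top hW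
  let P : E →ₗ[ℝ] W := W.orthogonalProjectionOnto
  have hP (x : E) (w : W) : ⟪P x, w⟫ = ⟪x, (w : E)⟫ :=
    W.inner_orthogonalProjectionOnto_eq_of_mem_right w x
  refine ⟨W.subtype ∘ₗ J ∘ₗ P, mem_skewAdjoint_iff_inner.2 fun x y => ?_, ?_⟩
  · calc ⟪(J (P x) : E), y⟫ = ⟪J (P x), P y⟫ := by
          rw [real_inner_comm, ← hP, real_inner_comm]
      _ = -⟪P x, J (P y)⟫ := mem_skewAdjoint_iff_inner.1 hJ _ _
      _ = -⟪x, (J (P y) : E)⟫ := by rw [hP]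
  · have hPW : P.range = ⊤ := LinearMap.range_eq_top.2 fun w =>
      ⟨w, Submodule.orthogonalProjectionOnto_mem_subspace_eq_self w⟩
    rw [LinearMap.range_comp, LinearMap.range_comp, hPW, ← LinearMap.range_eq_map, hJW,
      ← LinearMap.range_eq_map, W.range_subtype]

variable {T : E →ₗ[ℝ] E}

theorem eigenspace_one_le_orthogonal_eigenspace_neg_one (hT : T ∈ unitary (E →ₗ[ℝ] E)) :
    End.eigenspace T 1 ≤ (End.eigenspace T (-1))ᗮ := by
  intro x hx y hy
  rw [End.mem_eigenspace_iff] at hx hy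
  have h : ⟪T y, T x⟫ = ⟪y, x⟫ := by
    rw [← LinearMap.adjoint_inner_left, ← LinearMap.star_eq_adjoint, ← Module.End.mul_apply,
      Unitary.star_mul_self_of_mem hT, Module.End.one_apply]
  rw [hx, hy, one_smul, neg_one_smul, inner_neg_left] at h
  linarith

theorem ker_sub_star (hT : T ∈ unitary (E →ₗ[ℝ] E)) :
    (T - star T).ker = End.eigenspace T 1 ⊔ End.eigenspace T (-1) := by
  have hTT (x : E) : star T (T x) = x := LinearMap.congr_fun (Unitary.star_mul_self_of_mem hT) x
  have hTT' (x : E) : T (star T x) = x := LinearMap.congr_fun (Unitary.mul_star_self_of_mem hT) x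
  refine le_antisymm (fun x hx => ?_) (sup_le (fun x hx => ?_) fun x hx => ?_)
  · have hx : T x = star T x := sub_eq_zero.1 hx
    have hsq : T (T x) = x := by rw [hx, hTT']
    refine Submodule.mem_sup.2 ⟨(2⁻¹ : ℝ) • (x + T x), ?_, (2⁻¹ : ℝ) • (x - T x), ?_, by module⟩
    · rw [End.mem_eigenspace_iff, map_smul, map_add, hsq]
      module
    · rw [End.mem_eigenspace_iff, map_smul, map_sub, hsq]
      module
  · rw [End.mem_eigenspace_iff, one_smul] at hx
    have hstar : star T x = x := by simpa only [hx] using hTT x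
    rw [LinearMap.mem_ker, LinearMap.sub_apply, hx, hstar, sub_self]
  · rw [End.mem_eigenspace_iff, neg_one_smul] at hx
    have hstar : star T x = -x := by
      rw [eq_neg_iff_add_eq_zero, ← neg_eq_zero, neg_add, ← map_neg, ← hx, hTT, hx]
      exact add_neg_cancel x
    rw [LinearMap.mem_ker, LinearMap.sub_apply, hx, hstar, sub_self]

theorem even_finrank_eigenspace_neg_one (hT : T ∈ unitary (E →ₗ[ℝ] E))
    (hE : Even (finrank ℝ E)) (hfix : Even (finrank ℝ (End.eigenspace T 1))) :
    Even (finrank ℝ (End.eigenspace T (-1))) := by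
  let K := T - star T
  have hrank : finrank ℝ K.range + finrank ℝ K.ker = finrank ℝ E := K.finrank_range_add_finrank_ker
  have hker : finrank ℝ K.ker =
      finrank ℝ (End.eigenspace T 1) + finrank ℝ (End.eigenspace T (-1)) := by
    rw [ker_sub_star hT, ← Submodule.finrank_sup_add_finrank_inf_eq,
      ((Submodule.orthogonal_disjoint _).symm.mono_left
        (eigenspace_one_le_orthogonal_eigenspace_neg_one hT)).eq_bot, finrank_bot, add_zero]
  rw [← hrank, hker] at hE
  have hK : Even (finrank ℝ K.range) :=
    even_finrank_range_of_mem_skewAdjoint (sub_star_mem_skewAdjoint T)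
  exact (Nat.even_add.1 ((Nat.even_add.1 hE).1 hK)).1 hfix

theorem exists_mem_skewAdjoint_commute_ker_eq_bot (hT : T ∈ unitary (E →ₗ[ℝ] E))
    (hE : Even (finrank ℝ E)) (hfix : Even (finrank ℝ (End.eigenspace T 1))) :
    ∃ B ∈ skewAdjoint (E →ₗ[ℝ] E), Commute T B ∧ B.ker = ⊥ := by
  obtain ⟨J₁, hJ₁, hr₁⟩ := exists_mem_skewAdjoint_range_eq hfix
  obtain ⟨J₂, hJ₂, hr₂⟩ :=
    exists_mem_skewAdjoint_range_eq (even_finrank_eigenspace_neg_one hT hE hfix)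
  let K := T - star T
  have hK : K ∈ skewAdjoint (E →ₗ[ℝ] E) := sub_star_mem_skewAdjoint T
  have hTJ {J : E →ₗ[ℝ] E} {c : ℝ} (hJ : J.range = End.eigenspace T c) : T * J = c • J :=
    LinearMap.ext fun x => End.mem_eigenspace_iff.1 (hJ ▸ J.mem_range_self x)
  refine ⟨J₁ + J₂ + K, add_mem (add_mem hJ₁ hJ₂) hK, ?_, ?_⟩
  · exact ((commute_of_mul_eq_smul hT hJ₁ (by norm_num) (hTJ hr₁)).add_right
      (commute_of_mul_eq_smul hT hJ₂ (by norm_num) (hTJ hr₂))).add_right (commute_sub_star hT)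
  · have h₁₂ : J₁.range ≤ J₂.rangeᗮ := by
      rw [hr₁, hr₂]
      exact eigenspace_one_le_orthogonal_eigenspace_neg_one hT
    have hK₁₂ : (J₁ + J₂).range ≤ K.rangeᗮ := by
      rw [orthogonal_range_of_mem_skewAdjoint hK, ker_sub_star hT, ← hr₁, ← hr₂]
      exact LinearMap.range_add_le J₁ J₂
    rw [ker_add_eq_inf_of_range_le hK₁₂, ker_add_eq_inf_of_range_le h₁₂,
      ← orthogonal_range_of_mem_skewAdjoint hJ₁, ← orthogonal_range_of_mem_skewAdjoint hJ₂,
      Submodule.inf_orthogonal, ker_sub_star hT, hr₁, hr₂, inf_comm,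
      Submodule.inf_orthogonal_eq_bot]

theorem commute_map_of_forall_mem_zpowers {G M : Type*} [Group G] [Monoid M] (φ : G →* M) {g₀ : G}
    (hg₀ : ∀ g, g ∈ Subgroup.zpowers g₀) {b : M} (hb : Commute (φ g₀) b) (g : G) :
    Commute (φ g) b := by
  obtain ⟨m, rfl⟩ := hg₀ g
  rw [← φ.coe_toHomUnits, map_zpow]
  exact Commute.units_zpow_left (u := φ.toHomUnits g₀) hb m

theorem exists_mem_skewAdjoint_forall_commute_ker_eq_bot {G : Type*} [Group G] [IsCyclic G]
    {φ : Representation ℝ G E} (hφ : ∀ g, φ g ∈ unitary (E →ₗ[ℝ] E)) (hE : Even (finrank ℝ E))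
    (hfix : Even (finrank ℝ φ.invariants)) :
    ∃ B ∈ skewAdjoint (E →ₗ[ℝ] E), (∀ g, Commute (φ g) B) ∧ B.ker = ⊥ := by
  obtain ⟨g₀, hg₀⟩ := IsCyclic.exists_generator (α := G)
  have hinv : φ.invariants = End.eigenspace (φ g₀) 1 := Submodule.ext fun x => by
    rw [φ.mem_invariants_iff_of_forall_mem_zpowers g₀ hg₀, End.mem_eigenspace_iff, one_smul]
  obtain ⟨B, hB, hcomm, hker⟩ :=
    exists_mem_skewAdjoint_commute_ker_eq_bot (hφ g₀) hE (hinv ▸ hfix)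
  exact ⟨B, hB, commute_map_of_forall_mem_zpowers φ hg₀ hcomm, hker⟩

end SkewAdjoint

section OrthogonalRepresentation

open Module
open scoped RealInnerProductSpace

section

variable {E : Type*} [NormedAddCommGroup E] [NormedSpace ℝ E]

theorem submodule_eq_of_forall_mem_sphere {V W : Submodule ℝ E}
    (h : ∀ x ∈ Metric.sphere (0 : E) 1, x ∈ V ↔ x ∈ W) : V = W := by
  ext x
  rcases eq_or_ne x 0 with rfl | hx
  · exact iff_of_true V.zero_mem W.zero_mem
  · have hx' : ‖x‖⁻¹ ≠ 0 := inv_ne_zero (norm_ne_zero_iff.2 hx)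
    rw [← V.smul_mem_iff hx', ← W.smul_mem_iff hx']
    exact h _ (mem_sphere_zero_iff_norm.2 (norm_smul_inv_norm (𝕜 := ℝ) hx))

end

variable {E : Type*} [NormedAddCommGroup E] [InnerProductSpace ℝ E] {G : Type*} [Monoid G]

/-- An orthogonal representation, given by linear isometries, as a linear representation. -/
def linearRepresentation (ρ : G →* (E ≃ₗᵢ[ℝ] E)) : Representation ℝ G E where
  toFun g := (ρ g).toLinearEquiv
  map_one' := by rw [map_one]; rfl
  map_mul' g h := by rw [map_mul]; rfl

theorem linearRepresentation_mem_unitary [FiniteDimensional ℝ E] (ρ : G →* (E ≃ₗᵢ[ℝ] E)) (g : G) :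
    linearRepresentation ρ g ∈ unitary (E →ₗ[ℝ] E) := by
  have hstar : star (linearRepresentation ρ g) = (ρ g).symm.toLinearEquiv :=
    (ρ g).adjoint_toLinearMap_eq_symm
  rw [Unitary.mem_iff, hstar]
  exact ⟨LinearMap.ext (ρ g).symm_apply_apply, LinearMap.ext (ρ g).apply_symm_apply⟩

variable {n : ℕ}
  {ρ : G →* (EuclideanSpace ℝ (Fin (n + 1)) ≃ₗᵢ[ℝ] EuclideanSpace ℝ (Fin (n + 1)))}

theorem eqTCcover_sphereAct_two_of_mem_skewAdjoint
    {B : EuclideanSpace ℝ (Fin (n + 1)) →ₗ[ℝ] EuclideanSpace ℝ (Fin (n + 1))}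
    (hB : B ∈ skewAdjoint (EuclideanSpace ℝ (Fin (n + 1)) →ₗ[ℝ] EuclideanSpace ℝ (Fin (n + 1))))
    (hker : B.ker = ⊥) (hcomm : ∀ g, Commute (linearRepresentation ρ g) B) :
    eqTCcover (sphereAct ρ) 2 := by
  let c : C(Sph n, EuclideanSpace ℝ (Fin (n + 1))) :=
    ⟨fun y => B y, B.continuous_of_finiteDimensional.comp continuous_subtype_val⟩
  have hc (y : Sph n) : c y ≠ 0 := fun h =>
    ne_zero_of_mem_unit_sphere y (LinearMap.ker_eq_bot'.1 hker y h)
  let b : C(Sph n, Sph n) := sphereNormalize c hc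
  have hb : IsEquivariantMap (sphereAct ρ) (sphereAct ρ) b := fun g y => Subtype.ext <| by
    have hcg : c (sphereAct ρ g y) = ρ g (c y) := (LinearMap.congr_fun (hcomm g) y).symm
    change ‖c (sphereAct ρ g y)‖⁻¹ • c (sphereAct ρ g y) = ρ g (‖c y‖⁻¹ • c y)
    rw [hcg, LinearIsometryEquiv.norm_map, map_smul]
  have horth (y : Sph n) : ⟪(y : EuclideanSpace ℝ (Fin (n + 1))), b y⟫ = 0 := by
    change ⟪(y : EuclideanSpace ℝ (Fin (n + 1))), ‖c y‖⁻¹ • B y⟫ = 0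
    rw [inner_smul_right, inner_apply_self_of_mem_skewAdjoint hB, mul_zero]
  have hself (y : Sph n) : ⟪(y : EuclideanSpace ℝ (Fin (n + 1))), y⟫ ≠ 0 :=
    inner_self_ne_zero.2 (ne_zero_of_mem_unit_sphere y)
  refine eqTCcover_sphereAct_two hb (fun y hy => hself y ?_) fun y hy => hself y ?_
  · simpa only [hy] using horth y
  · simpa [hy] using horth y

end OrthogonalRepresentation

end PaperTC

theorem eqTC_linear_zmod_sphere_eq_two_general {G : Type*} [Group G] [IsCyclic G] {n : ℕ}
    (ρ : G →* (EuclideanSpace ℝ (Fin (n + 1)) ≃ₗᵢ[ℝ] EuclideanSpace ℝ (Fin (n + 1))))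
    {V : Submodule ℝ (EuclideanSpace ℝ (Fin (n + 1)))}
    (hfixV : ∀ x : ↥(Sph n),
      (∀ g, sphereAct ρ g x = x) ↔ (x : EuclideanSpace ℝ (Fin (n + 1))) ∈ V)
    (hn : Odd n) (hV : Even (Module.finrank ℝ V)) :
    eqTC (sphereAct ρ) = 2 := by
  have hinv : (linearRepresentation ρ).invariants = V :=
    submodule_eq_of_forall_mem_sphere fun x hx =>
      (forall_congr' fun _ => Subtype.ext_iff.symm).trans (hfixV ⟨x, hx⟩)
  obtain ⟨B, hB, hcomm, hker⟩ := exists_mem_skewAdjoint_forall_commute_ker_eq_bot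
    (linearRepresentation_mem_unitary ρ) (finrank_euclideanSpace_fin (𝕜 := ℝ) ▸ hn.add_one)
    (hinv ▸ hV)
  have : Nonempty (Sph n) := (NormedSpace.sphere_nonempty.2 zero_le_one).to_subtype
  exact eqTC_eq_two not_contractibleSpace_sphere
    (eqTCcover_sphereAct_two_of_mem_skewAdjoint hB hker hcomm)

/-- Let `ℤ/p` (`p` prime) act linearly on `S^n` with fixed point set the
great `k`-sphere cut out by a pointwise-fixed subspace `V` of dimension `k + 1`, where
`0 < k < n`.  If both `n` and `k` are odd, then `TC_{ℤ/p}(S^n) = 2`. -/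
theorem eqTC_linear_zmod_sphere_eq_two (p : ℕ) (hp : p.Prime) (n k : ℕ)
    (hk : 0 < k) (hkn : k < n)
    (ρ : Multiplicative (ZMod p) →*
      (EuclideanSpace ℝ (Fin (n + 1)) ≃ₗᵢ[ℝ] EuclideanSpace ℝ (Fin (n + 1))))
    (V : Submodule ℝ (EuclideanSpace ℝ (Fin (n + 1))))
    (hV : Module.finrank ℝ V = k + 1)
    (hVfix : ∀ g : Multiplicative (ZMod p), ∀ v ∈ V, ρ g v = v)
    (hfixV : ∀ x : ↥(Sph n),
      (∀ g : Multiplicative (ZMod p), sphereAct ρ g x = x) ↔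
        (x : EuclideanSpace ℝ (Fin (n + 1))) ∈ V)
    (hnodd : Odd n) (hkodd : Odd k) :
    eqTC (sphereAct ρ) = 2 :=
  eqTC_linear_zmod_sphere_eq_two_general ρ hfixV hnodd (hV ▸ hkodd.add_one)
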